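/- Fix a real number M > 3π/√2. For j = 1,…,4 let i_j ≥ 1 be integer scales, let s_j ∈ {0,1,…,i_j}, and let q_j be a real number compatible with s_j at scale i_j, and suppose q₁ + q₂ + q₃ + q₄ = 0. Relabel the four triples (i_j, s_j, q_j) so that s₁ ≤ s₂ ≤ s₃ ≤ s₄. Then either s₂ ≤ s₁ + 1 (the two smallest sector indices differ by at most one unit), or s₁ = i₁ and i₁ < i_j for j = 2, 3, 4 (the smallest index coincides with its own scale, which is strictly smaller than the three other scales). -/

import Mathlib

/-! If `s₂ ≥ s₁ + 2` and `s₁ = i₁`, then `i₁ = s₁ < s_j ≤ i_j` for the other `j`. If `s₂ ≥ s₁ + 2` and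
`s₁ < i₁`, then `q₁` satisfies the lower bound `|q₁| ≥ 2M^{-s₁-1}/π`, whereas each of the other three
momenta is at most `√2·M^{-s₁-2}` in absolute value. Since `q₁ = -(q₂ + q₃ + q₄)`, this forces
`2M ≤ 3√2·π`, that is `M ≤ 3π/√2`. -/

/-- A real number `q` is compatible with the sector index `s ∈ {0, 1, …, i}` at scale
`i`, for the parameter `M`: it satisfies `2/(πM) ≤ |q| ≤ 1` when `s = 0`,
`2M^{-s}/(πM) ≤ |q| ≤ √2·M^{-s}` when `1 ≤ s ≤ i-1`, and `|q| ≤ √2·M^{-i}` when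
`s = i`. -/
def SectorCompatible (M : ℝ) (i s : ℕ) (q : ℝ) : Prop :=
  (s = 0 → 2 / (Real.pi * M) ≤ |q| ∧ |q| ≤ 1) ∧
  (1 ≤ s ∧ s ≤ i - 1 →
    2 * M ^ (-(s : ℤ)) / (Real.pi * M) ≤ |q| ∧ |q| ≤ Real.sqrt 2 * M ^ (-(s : ℤ))) ∧
  (s = i → |q| ≤ Real.sqrt 2 * M ^ (-(i : ℤ)))

theorem SectorCompatible.abs_le {M : ℝ} {i s : ℕ} {q : ℝ} (h : SectorCompatible M i s q)
    (h1 : 1 ≤ s) (hs : s ≤ i) : |q| ≤ Real.sqrt 2 * M ^ (-(s : ℤ)) := by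
  rcases eq_or_lt_of_le hs with e | e
  · have := h.2.2 e
    rwa [← e] at this
  · exact (h.2.1 ⟨h1, by omega⟩).2

theorem SectorCompatible.le_abs {M : ℝ} {i s : ℕ} {q : ℝ} (h : SectorCompatible M i s q)
    (hs : s < i) : 2 * M ^ (-(s : ℤ)) / (Real.pi * M) ≤ |q| := by
  rcases Nat.eq_zero_or_pos s with e | e
  · simpa [e] using (h.1 e).1
  · exact (h.2.1 ⟨e, by omega⟩).1

/-- **Multislice sector momentum-conservation rule.** Fix `M > 3π/√2`.  For `j = 1, …, 4`
let `i_j ≥ 1` be scales, `s_j ∈ {0, …, i_j}` sector indices sorted so that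
`s₁ ≤ s₂ ≤ s₃ ≤ s₄`, and `q_j` compatible with `s_j` at scale `i_j`, with
`q₁ + q₂ + q₃ + q₄ = 0`.  Then either `s₂ ≤ s₁ + 1`, or `s₁ = i₁` and `i₁ < i_j` for
`j = 2, 3, 4`. -/
theorem multislice_sector_rule (M : ℝ) (hM : 3 * Real.pi / Real.sqrt 2 < M)
    (i : Fin 4 → ℕ) (hi : ∀ j, 1 ≤ i j) (s : Fin 4 → ℕ) (hs : ∀ j, s j ≤ i j)
    (hmono : ∀ j k : Fin 4, j ≤ k → s j ≤ s k)
    (q : Fin 4 → ℝ) (hq : ∀ j, SectorCompatible M (i j) (s j) (q j))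
    (hsum : q 0 + q 1 + q 2 + q 3 = 0) :
    s 1 ≤ s 0 + 1 ∨ (s 0 = i 0 ∧ ∀ j : Fin 4, j ≠ 0 → i 0 < i j) := by
  by_contra! hcon
  obtain ⟨h01, hcon⟩ := hcon
  have hmono1 : ∀ j : Fin 4, j ≠ 0 → s 1 ≤ s j := fun j hj => hmono 1 j (by omega)
  have hlt : s 0 < i 0 := by
    refine lt_of_le_of_ne (hs 0) fun e => ?_
    obtain ⟨j, hj, hle⟩ := hcon e
    have := hmono1 j hj
    have := hs j
    omega
  have hsqrt : (0 : ℝ) < Real.sqrt 2 := by positivity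
  have hsq : Real.sqrt 2 * Real.sqrt 2 = 2 := Real.mul_self_sqrt (by norm_num)
  have hpi := Real.pi_gt_three
  have hM' : 3 * Real.pi < M * Real.sqrt 2 := (div_lt_iff₀ hsqrt).1 hM
  have hM1 : 1 < M := by nlinarith
  have hM0 : 0 < M := by linarith
  set A : ℝ := M ^ (-(s 0 : ℤ)) with hA
  have hA0 : 0 < A := zpow_pos hM0 _
  have hup : ∀ j : Fin 4, j ≠ 0 → |q j| ≤ Real.sqrt 2 * (A / M ^ 2) := fun j hj => by
    have hj1 := hmono1 j hj
    refine ((hq j).abs_le (by omega) (hs j)).trans (mul_le_mul_of_nonneg_left ?_ hsqrt.le)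
    have e : A / M ^ 2 = M ^ (-(s 0 : ℤ) - 2) := by
      rw [zpow_sub₀ hM0.ne']; rfl
    rw [e]
    exact zpow_le_zpow_right₀ hM1.le (by omega)
  have hlow := (hq 0).le_abs hlt
  have habs : |q 0| ≤ |q 1| + |q 2| + |q 3| := by
    have e : q 0 = -(q 1 + q 2 + q 3) := by linarith
    rw [e, abs_neg]
    exact abs_add_three _ _ _
  have h1 := hup 1 (by decide)
  have h2 := hup 2 (by decide)
  have h3 := hup 3 (by decide)
  have hfin : 2 * A / (Real.pi * M) ≤ 3 * (Real.sqrt 2 * (A / M ^ 2)) := by linarith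
  have hR : 3 * (Real.sqrt 2 * (A / M ^ 2)) < 2 * A / (Real.pi * M) := by
    have e : 2 * A / (Real.pi * M) - 3 * (Real.sqrt 2 * (A / M ^ 2))
        = A * (2 * M - 3 * Real.sqrt 2 * Real.pi) / (Real.pi * M ^ 2) := by
      field_simp
    -- multiplying `3π < M√2` by `√2` puts the hypothesis on `M` in the form needed here
    have hpos : 0 < 2 * M - 3 * Real.sqrt 2 * Real.pi := by
      nlinarith [mul_lt_mul_of_pos_right hM' hsqrt]
    have : 0 < A * (2 * M - 3 * Real.sqrt 2 * Real.pi) / (Real.pi * M ^ 2) := by positivity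
    linarith
  linarith
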